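/- Orthonormality of the pf-relation states (binary phases). Let N ≥ 1. For a tuple p = ((x_1,y_1),…,(x_t,y_t)) ∈ ([N]×[N])^t with t ≤ N, define the vector pf_p ∈ ℓ²(S_N × ({0,1}^{[N]})) by pf_p(π,f) := (1/√((N−t)!)) · 𝟙[π(x_i)=y_i for all i ∈ [t]] · (1/√(2^N)) · (−1)^{f(x_1)+⋯+f(x_t)}. Then for any two bijective tuples p and p' (of possibly different lengths t, t' ≤ N), the inner product ⟨pf_{p'}, pf_p⟩ equals 1 if the multisets {(x_1,y_1),…,(x_t,y_t)} and {(x'_1,y'_1),…,(x'_{t'},y'_{t'})} are equal, and equals 0 otherwise. In particular, the pf-relation states of bijective tuples form an orthonormal family indexed by bijective relations. -/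

import Mathlib

/-!
The inner product factors into a sum over `π` of the product of the two indicators and a sum over
`f` of the product of the two phases (`inner_pfVec_eq`).

The phase of `p` is the character of `(ℤ/2)^N` attached to the set of first coordinates of `p`, so
the sum over `f` vanishes as soon as these sets differ for `p` and `p'` (`sum_phase_eq_zero`). If
they agree, a permutation satisfying both sets of constraints forces the same second coordinate over
each first coordinate, so the two relations coincide; hence for different relations the sum over `π`
vanishes.

If the relations agree then `t = t'`, the phases square to `1` and give `2 ^ N`, and the
permutations satisfying the constraints number `(N - t)!` (`card_perm_extending`): after translation
by one such permutation they are the permutations of the complement of the first coordinates. These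
values cancel the normalisation.
-/

open Finset

/-- The pf-relation vector `pf_p ∈ ℓ²(S_N × {0,1}^{[N]})` of a tuple
`p = ((x_1,y_1),…,(x_t,y_t))`:
`pf_p(π,f) = (1/√((N−t)!)) · 𝟙[π x_i = y_i ∀i] · (1/√(2^N)) · (−1)^{f(x_1)+⋯+f(x_t)}`. -/
noncomputable def pfVec (N t : ℕ) (p : Fin t → Fin N × Fin N) :
    Equiv.Perm (Fin N) × (Fin N → Fin 2) → ℂ :=
  fun q =>
    (Real.sqrt ((N - t).factorial) : ℂ)⁻¹ *
      (if ∀ i, q.1 (p i).1 = (p i).2 then 1 else 0) *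
      (Real.sqrt (2 ^ N) : ℂ)⁻¹ *
      (-1 : ℂ) ^ (∑ i, ((q.2 (p i).1 : ℕ)))

/-- A tuple of pairs is bijective if its first coordinates are pairwise distinct and its
second coordinates are pairwise distinct. -/
def IsBijTuple {N t : ℕ} (p : Fin t → Fin N × Fin N) : Prop :=
  Function.Injective (fun i => (p i).1) ∧ Function.Injective (fun i => (p i).2)

/-- The sign `(-1)^{f(x_1)+⋯+f(x_t)}` occurring in `pfVec`. -/
noncomputable def phase {N t : ℕ} (p : Fin t → Fin N × Fin N) (f : Fin N → Fin 2) : ℂ :=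
  (-1 : ℂ) ^ (∑ i, ((f (p i).1 : ℕ)))

/-- The permutation `π` sends `x_i` to `y_i` for every pair of the tuple. -/
def Extends {N t : ℕ} (p : Fin t → Fin N × Fin N) (π : Equiv.Perm (Fin N)) : Prop :=
  ∀ i, π (p i).1 = (p i).2

instance {N t : ℕ} (p : Fin t → Fin N × Fin N) : DecidablePred (Extends p) :=
  fun π => inferInstanceAs (Decidable (∀ i, π (p i).1 = (p i).2))

lemma inner_pfVec_eq {N t t' : ℕ} (p : Fin t → Fin N × Fin N) (p' : Fin t' → Fin N × Fin N) :
    (∑ q : Equiv.Perm (Fin N) × (Fin N → Fin 2),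
        (starRingEnd ℂ) (pfVec N t' p' q) * pfVec N t p q)
      = ((Real.sqrt ((N - t').factorial) : ℂ)⁻¹ * (Real.sqrt ((N - t).factorial) : ℂ)⁻¹ *
          ((Real.sqrt (2 ^ N) : ℂ)⁻¹ * (Real.sqrt (2 ^ N) : ℂ)⁻¹)) *
        ((∑ π : Equiv.Perm (Fin N), if Extends p' π ∧ Extends p π then (1 : ℂ) else 0) *
          ∑ f : Fin N → Fin 2, phase p' f * phase p f) := by
  rw [Fintype.sum_prod_type, Finset.sum_mul_sum, Finset.mul_sum]
  refine Finset.sum_congr rfl fun π _ => ?_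
  rw [Finset.mul_sum]
  refine Finset.sum_congr rfl fun f _ => ?_
  have h : (if Extends p' π ∧ Extends p π then (1 : ℂ) else 0)
      = (if ∀ i, π (p' i).1 = (p' i).2 then 1 else 0) *
        (if ∀ i, π (p i).1 = (p i).2 then 1 else 0) := by
    unfold Extends
    split_ifs <;> simp_all
  rw [h]
  simp only [pfVec, phase, map_mul, map_inv₀, map_pow, map_neg, map_one, Complex.conj_ofReal,
    apply_ite (starRingEnd ℂ), map_zero]
  ring

lemma phase_eq_prod {N t : ℕ} {p : Fin t → Fin N × Fin N}
    (hp : Function.Injective fun i => (p i).1) (f : Fin N → Fin 2) :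
    phase p f = ∏ x, if x ∈ Set.range (fun i => (p i).1) then (-1 : ℂ) ^ (f x : ℕ) else 1 := by
  classical
  rw [phase, ← Finset.prod_pow_eq_pow_sum, ← Finset.prod_filter]
  have h : (Finset.univ.filter fun x => x ∈ Set.range fun i => (p i).1)
      = Finset.univ.image fun i => (p i).1 := by
    ext x; simp
  rw [h, Finset.prod_image hp.injOn]

/-- Orthogonality of distinct characters: the sum over `f` factors over the points of `[N]`, and the
factor at a point `x` that only one of the two tuples uses is `1 + (-1) = 0`. -/
lemma sum_phase_eq_zero {N t t' : ℕ} {p : Fin t → Fin N × Fin N} {p' : Fin t' → Fin N × Fin N}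
    (hp : Function.Injective fun i => (p i).1) (hp' : Function.Injective fun i => (p' i).1)
    {x : Fin N} (hx : x ∈ Set.range fun i => (p i).1) (hx' : x ∉ Set.range fun i => (p' i).1) :
    ∑ f : Fin N → Fin 2, phase p' f * phase p f = 0 := by
  classical
  simp_rw [phase_eq_prod hp, phase_eq_prod hp', ← Finset.prod_mul_distrib]
  rw [← Fintype.piFinset_univ, ← Finset.prod_univ_sum (fun _ => Finset.univ)
    (fun (y : Fin N) (b : Fin 2) =>
      (if y ∈ Set.range (fun i => (p' i).1) then (-1 : ℂ) ^ (b : ℕ) else 1) *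
        (if y ∈ Set.range (fun i => (p i).1) then (-1 : ℂ) ^ (b : ℕ) else 1))]
  refine Finset.prod_eq_zero (Finset.mem_univ x) ?_
  simp only [if_pos hx, if_neg hx', Fin.sum_univ_two]
  simp

lemma phase_mul_self {N t : ℕ} (p : Fin t → Fin N × Fin N) (f : Fin N → Fin 2) :
    phase p f * phase p f = 1 := by
  rw [phase, ← mul_pow]; simp

lemma card_perm_fixing {N t : ℕ} {x : Fin t → Fin N} (hx : Function.Injective x) :
    Fintype.card {π : Equiv.Perm (Fin N) // ∀ i, π (x i) = x i} = (N - t).factorial := by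
  classical
  have e : {π : Equiv.Perm (Fin N) // ∀ i, π (x i) = x i} ≃
      {π : Equiv.Perm (Fin N) // ∀ a, ¬ (a ∉ Set.range x) → π a = a} :=
    Equiv.subtypeEquivRight fun π => by simp
  rw [Fintype.card_congr (e.trans (Equiv.Perm.subtypeEquivSubtypePerm _).symm),
    Fintype.card_perm, Fintype.card_subtype_compl]
  congr 2
  · simp
  · exact (Fintype.card_congr (Equiv.ofInjective x hx)).symm.trans (Fintype.card_fin t)

lemma card_perm_extending {N t : ℕ} {p : Fin t → Fin N × Fin N} (hp : IsBijTuple p) :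
    Fintype.card {π : Equiv.Perm (Fin N) // Extends p π} = (N - t).factorial := by
  classical
  obtain ⟨σ, hσ⟩ : ∃ σ : Equiv.Perm (Fin N), Extends p σ := by
    let e := (Equiv.ofInjective _ hp.1).symm.trans (Equiv.ofInjective _ hp.2)
    refine ⟨e.extendSubtype, fun i => ?_⟩
    rw [Equiv.extendSubtype_apply_of_mem e (p i).1 ⟨i, rfl⟩]
    change ((Equiv.ofInjective _ hp.2 ((Equiv.ofInjective _ hp.1).symm
      (Equiv.ofInjective _ hp.1 i)) : Set.range fun i => (p i).2) : Fin N) = (p i).2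
    rw [Equiv.symm_apply_apply]
    rfl
  rw [← card_perm_fixing hp.1]
  refine Fintype.card_congr ((Equiv.mulLeft σ⁻¹).subtypeEquiv fun π => ?_)
  refine forall_congr' fun i => ?_
  rw [Equiv.coe_mulLeft, Equiv.Perm.mul_apply, Equiv.Perm.inv_eq_iff_eq, hσ i]

/-- Bijective tuples have no repeated pairs, so they agree as multisets when they have the same set
of pairs. -/
lemma coe_ofFn_eq_iff {N t t' : ℕ} {p : Fin t → Fin N × Fin N} {p' : Fin t' → Fin N × Fin N}
    (hp : IsBijTuple p) (hp' : IsBijTuple p') :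
    (List.ofFn p : Multiset (Fin N × Fin N)) = (List.ofFn p' : Multiset (Fin N × Fin N)) ↔
      Set.range p = Set.range p' := by
  have hi : Function.Injective p := fun i j h => hp.1 (congrArg Prod.fst h)
  have hi' : Function.Injective p' := fun i j h => hp'.1 (congrArg Prod.fst h)
  rw [Multiset.coe_eq_coe, List.perm_ext_iff_of_nodup (List.nodup_ofFn.2 hi)
    (List.nodup_ofFn.2 hi'), Set.ext_iff]
  simp only [List.mem_ofFn, Set.mem_range]

lemma range_subset_of_extends {N t t' : ℕ} {p : Fin t → Fin N × Fin N}
    {p' : Fin t' → Fin N × Fin N} {π : Equiv.Perm (Fin N)} (h : Extends p π) (h' : Extends p' π)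
    (hX : (Set.range fun i => (p i).1) ⊆ Set.range fun i => (p' i).1) :
    Set.range p ⊆ Set.range p' := by
  rintro _ ⟨i, rfl⟩
  obtain ⟨j, hj⟩ := hX ⟨i, rfl⟩
  exact ⟨j, Prod.ext hj (by rw [← h i, ← h' j]; exact congrArg π hj)⟩

/-- **Orthonormality of the pf-relation states (binary phases).** For bijective tuples
`p, p'` of lengths `t, t' ≤ N`, `⟨pf_{p'}, pf_p⟩ = 1` if `p` and `p'` are equal as
multisets of pairs, and `= 0` otherwise. -/
theorem pf_relation_states_orthonormal (N t t' : ℕ) (hN : 1 ≤ N)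
    (ht : t ≤ N) (ht' : t' ≤ N)
    (p : Fin t → Fin N × Fin N) (p' : Fin t' → Fin N × Fin N)
    (hp : IsBijTuple p) (hp' : IsBijTuple p') :
    (∑ q : Equiv.Perm (Fin N) × (Fin N → Fin 2),
        (starRingEnd ℂ) (pfVec N t' p' q) * pfVec N t p q)
      = if (List.ofFn p : Multiset (Fin N × Fin N)) = (List.ofFn p' : Multiset (Fin N × Fin N))
        then 1 else 0 := by
  have hm := coe_ofFn_eq_iff hp hp'
  rw [inner_pfVec_eq]
  by_cases hR : Set.range p = Set.range p'
  · rw [if_pos (hm.2 hR)]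
    obtain rfl : t = t' := by
      simpa using congrArg Multiset.card (hm.2 hR)
    -- `p` and `p'` may differ by a reordering, which changes neither the constraint nor the phase.
    have hE : ∀ π, Extends p' π ↔ Extends p π := fun π => by
      have key : ∀ r : Fin t → Fin N × Fin N,
          Extends r π ↔ ∀ z ∈ Set.range r, π z.1 = z.2 := fun r => by
        simp only [Set.forall_mem_range]; rfl
      rw [key, key, hR]
    have hX : (Set.range fun i => (p i).1) = Set.range fun i => (p' i).1 := by
      have h := congrArg (Set.image Prod.fst) hR
      simp only [← Set.range_comp] at h
      exact h
    have hP : ∀ f, phase p' f = phase p f := fun f => by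
      rw [phase_eq_prod hp.1, phase_eq_prod hp'.1]
      simp only [hX]
    have hcard : (∑ π : Equiv.Perm (Fin N), if Extends p π then (1 : ℂ) else 0)
        = ((N - t).factorial : ℂ) := by
      rw [Finset.sum_boole, ← card_perm_extending hp, Fintype.card_subtype]
    simp only [hE, hP, and_self, phase_mul_self, hcard]
    have h1 : (Real.sqrt ((N - t).factorial) : ℂ)⁻¹ * (Real.sqrt ((N - t).factorial) : ℂ)⁻¹
        = ((N - t).factorial : ℂ)⁻¹ := by
      rw [← mul_inv, ← Complex.ofReal_mul, Real.mul_self_sqrt (Nat.cast_nonneg _)]; simp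
    have h2 : (Real.sqrt (2 ^ N) : ℂ)⁻¹ * (Real.sqrt (2 ^ N) : ℂ)⁻¹ = ((2 : ℂ) ^ N)⁻¹ := by
      rw [← mul_inv, ← Complex.ofReal_mul, Real.mul_self_sqrt (by positivity)]; simp
    have h3 : ((N - t).factorial : ℂ) ≠ 0 := Nat.cast_ne_zero.2 (Nat.factorial_ne_zero _)
    rw [h1, h2]
    simp
    field_simp
  · rw [if_neg (mt hm.1 hR)]
    by_cases hX : (Set.range fun i => (p i).1) ⊆ Set.range fun i => (p' i).1
    · by_cases hX' : (Set.range fun i => (p' i).1) ⊆ Set.range fun i => (p i).1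
      · have h0 : ∀ π, ¬ (Extends p' π ∧ Extends p π) := fun π h =>
          hR ((range_subset_of_extends h.2 h.1 hX).antisymm
            (range_subset_of_extends h.1 h.2 hX'))
        simp [h0]
      · obtain ⟨x, hx, hx'⟩ := Set.not_subset.1 hX'
        have h0 := sum_phase_eq_zero hp'.1 hp.1 hx hx'
        simp_rw [mul_comm (phase p _)] at h0
        rw [h0, mul_zero, mul_zero]
    · obtain ⟨x, hx, hx'⟩ := Set.not_subset.1 hX
      rw [sum_phase_eq_zero hp.1 hp'.1 hx hx', mul_zero, mul_zero]
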